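/- arXiv:2001.11933 — 2 statements merged into one kernel-verified Lean document; each statement's English description precedes it below -/
import Mathlib

section
/- Let m, c, n₀, θ > 0 and u ∈ ℝ³, and set γ = mc²/θ, u⁰ = √(|u|² + c²). Then for each i ∈ {1,2,3}, c ∫_{ℝ³} p⁰ p_i M(p) dp = [n₀ m² / (γ K₂(γ))] [ (5K₃(γ) + γK₂(γ)) (u⁰)² u_i + K₃(γ) |u|² u_i ]. -/
/-!
The measure `dp / p⁰` is Lorentz invariant, so the integral can be computed in the rest frame.

A rotation (`longitudinal_moment`) puts `u` on the first axis, and the part of the direction `eᵢ`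
orthogonal to `u` contributes nothing, by reflection (`transverse_moment`). With
`a = u⁰ / c`, `b = |u| / c`, the boost `x ↦ a x + b p⁰` along the first axis is, for fixed
transverse momentum, a one-dimensional change of variables that turns the exponent
`b x - a p⁰` into `-p⁰` (`boost`). Applied on slices, and after discarding odd terms, it expresses
the integral through the rest-frame moments `∫ (p⁰)² e^{-k p⁰}` and `∫ p₁² e^{-k p⁰}` with
`k = c / θ` (`boost3`). These are radial, and the substitution `λ = k p⁰` in the Bessel integrals
(`bessel_integral`) followed by one integration by parts (`radial_by_parts`) identifies them with
`K₂(γ)` and `K₃(γ)`. No recurrence between Bessel functions is needed.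
-/
noncomputable section

open MeasureTheory

/-- Euclidean inner product on ℝ³. -/
def dot3 (p q : Fin 3 → ℝ) : ℝ := ∑ i, p i * q i

/-- The relativistic energy `p⁰ = √(m²c² + |p|²)`. -/
noncomputable def pZero (m c : ℝ) (p : Fin 3 → ℝ) : ℝ :=
  Real.sqrt (m ^ 2 * c ^ 2 + dot3 p p)

/-- Modified Bessel function of the second kind (integral formula). -/
noncomputable def Kbessel (j : ℕ) (γ : ℝ) : ℝ :=
  (2 ^ j * (Nat.factorial j : ℝ) / (Nat.factorial (2 * j) : ℝ)) * γ ^ (-(j : ℤ)) *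
    ∫ l in Set.Ioi γ, Real.exp (-l) * (l ^ 2 - γ ^ 2) ^ ((j : ℝ) - 1 / 2)

/-- The local relativistic Maxwellian
`M(p) = [n₀γ/(4πm³c³K₂(γ))] exp((u·p − u⁰p⁰)/θ)` with `γ = mc²/θ`,
`u⁰ = √(|u|² + c²)`. -/
noncomputable def Mloc (m c n₀ θ : ℝ) (u : Fin 3 → ℝ) (p : Fin 3 → ℝ) : ℝ :=
  n₀ * (m * c ^ 2 / θ) / (4 * Real.pi * m ^ 3 * c ^ 3 * Kbessel 2 (m * c ^ 2 / θ)) *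
    Real.exp ((dot3 u p - Real.sqrt (dot3 u u + c ^ 2) * pZero m c p) / θ)

/-! ### The energy function and integrability -/

/-- The relativistic energy `√(M² + r²)` as a function of the size `r` of the momentum, where `M`
stands for the product `m c`. On a one-dimensional slice `r` is a signed momentum component. -/
def en (M r : ℝ) : ℝ := √(M ^ 2 + r ^ 2)

lemma en_sq (M r : ℝ) : en M r ^ 2 = M ^ 2 + r ^ 2 := Real.sq_sqrt (by positivity)

lemma en_pos {M : ℝ} (hM : 0 < M) (r : ℝ) : 0 < en M r := Real.sqrt_pos.2 (by positivity)

lemma abs_le_en (M r : ℝ) : |r| ≤ en M r := Real.abs_le_sqrt (by nlinarith [sq_nonneg M])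

lemma le_en (M r : ℝ) : M ≤ en M r := Real.le_sqrt_of_sq_le (by nlinarith [sq_nonneg r])

lemma continuous_en (M : ℝ) : Continuous (en M) := by unfold en; fun_prop

lemma hasDerivAt_en {M : ℝ} (hM : 0 < M) (r : ℝ) : HasDerivAt (en M) (r / en M r) r := by
  have h : HasDerivAt (fun r : ℝ => M ^ 2 + r ^ 2) (2 * r) r := by
    simpa using (hasDerivAt_pow 2 r).const_add (M ^ 2)
  exact (h.sqrt (by positivity)).congr_deriv (mul_div_mul_left _ _ two_ne_zero)

/-- Integrability criterion used throughout, on the line and on ℝ³: polynomial growth times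
exponential decay in the energy. The bound is compared with `(1 + ‖x‖) ^ (-(dim E + 1))`. -/
lemma integrable_of_bound {E : Type*} [NormedAddCommGroup E] [NormedSpace ℝ E]
    [FiniteDimensional ℝ E] [MeasurableSpace E] [BorelSpace E] (μ : Measure E)
    [μ.IsAddHaarMeasure] {M δ : ℝ} (hM : 0 < M) (hδ : 0 < δ) (C : ℝ) (n : ℕ) {f : E → ℝ}
    (hf : AEStronglyMeasurable f μ)
    (hb : ∀ x, |f x| ≤ C * (en M ‖x‖ ^ n * Real.exp (-δ * en M ‖x‖))) : Integrable f μ := by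
  set d := Module.finrank ℝ E
  set N := n + (d + 1)
  have h0 : Integrable (fun x : E => (1 + ‖x‖) ^ (-((d : ℝ) + 1))) μ :=
    integrable_one_add_norm (by simp [d])
  refine (h0.const_mul (|C| * (N.factorial / δ ^ N * (1 / M + 1) ^ (d + 1)))).mono' hf ?_
  refine Filter.Eventually.of_forall fun x => ?_
  rw [Real.norm_eq_abs]
  refine (hb x).trans ?_
  set e := en M ‖x‖
  have he : 0 < e := en_pos hM _
  have h1 : 1 + ‖x‖ ≤ (1 / M + 1) * e := by
    have h2 : 1 ≤ 1 / M * e := by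
      rw [one_div, inv_mul_eq_div, le_div_iff₀ hM, one_mul]; exact le_en M _
    have h3 : ‖x‖ ≤ e := (le_abs_self _).trans (abs_le_en M _)
    linarith
  have h4 : (δ * e) ^ N / N.factorial ≤ Real.exp (δ * e) :=
    Real.pow_div_factorial_le_exp _ (by positivity) N
  have h5 : (1 + ‖x‖) ^ (-((d : ℝ) + 1)) = ((1 + ‖x‖) ^ (d + 1))⁻¹ := by
    rw [Real.rpow_neg (by positivity)]; norm_cast
  have h6 : (1 + ‖x‖) ^ (d + 1) ≤ (1 / M + 1) ^ (d + 1) * e ^ (d + 1) := by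
    rw [← mul_pow]; gcongr
  have hE : 0 < Real.exp (δ * e) := Real.exp_pos _
  rw [h5, mul_assoc]
  refine mul_le_mul (le_abs_self C) ?_ (by positivity) (by positivity)
  have h7 : e ^ n * Real.exp (-δ * e) ≤ N.factorial / δ ^ N * (e ^ (d + 1))⁻¹ := by
    rw [neg_mul, Real.exp_neg, ← div_eq_mul_inv, ← div_eq_mul_inv, div_div,
      div_le_div_iff₀ hE (by positivity)]
    rw [div_le_iff₀ (by positivity)] at h4
    calc e ^ n * (δ ^ N * e ^ (d + 1)) = (δ * e) ^ N := by simp only [N]; ring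
      _ ≤ _ := h4
      _ = _ := mul_comm _ _
  refine h7.trans ?_
  rw [mul_assoc]
  refine mul_le_mul_of_nonneg_left ?_ (by positivity)
  rw [← div_eq_mul_inv, inv_eq_one_div, div_le_div_iff₀ (by positivity) (by positivity)]
  linarith

lemma integrable_pow_exp {M k : ℝ} (hM : 0 < M) (hk : 0 < k) (n : ℕ) :
    Integrable (fun r : ℝ => r ^ n * Real.exp (-k * en M r)) := by
  have hc := continuous_en M
  refine integrable_of_bound volume hM hk 1 n
    (Continuous.aestronglyMeasurable (by fun_prop)) fun r => ?_
  have : en M ‖r‖ = en M r := by simp [en]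
  rw [this, abs_mul, abs_pow, Real.abs_exp, one_mul]
  gcongr
  exact abs_le_en M r

lemma integrable_pow_div_exp {M k : ℝ} (hM : 0 < M) (hk : 0 < k) (n : ℕ) :
    Integrable (fun r : ℝ => r ^ n / en M r * Real.exp (-k * en M r)) := by
  have hc := continuous_en M
  have h0 : ∀ r, en M r ≠ 0 := fun r => (en_pos hM r).ne'
  refine integrable_of_bound volume hM hk (1 / M) n
    (Continuous.aestronglyMeasurable (by fun_prop (disch := assumption))) fun r => ?_
  have : en M ‖r‖ = en M r := by simp [en]
  have hp := en_pos hM r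
  rw [this, abs_mul, abs_div, abs_pow, Real.abs_exp, abs_of_pos hp, ← mul_assoc]
  gcongr
  rw [div_eq_mul_one_div, mul_comm]
  gcongr
  · exact le_en M r
  · exact abs_le_en M r

/-! ### Radial integrals and Bessel functions -/

/-- Integration by parts: the integral over `(0, ∞)` of the derivative of `r ^ (n + 1) e^{-k p⁰}`
vanishes. -/
lemma radial_by_parts {M k : ℝ} (hM : 0 < M) (hk : 0 < k) (n : ℕ) :
    (n + 1) * ∫ r in Set.Ioi 0, r ^ n * Real.exp (-k * en M r)
      = k * ∫ r in Set.Ioi 0, r ^ (n + 2) / en M r * Real.exp (-k * en M r) := by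
  have hd : ∀ r : ℝ, HasDerivAt (fun r : ℝ => r ^ (n + 1) * Real.exp (-k * en M r))
      ((n + 1) * (r ^ n * Real.exp (-k * en M r))
        - k * (r ^ (n + 2) / en M r * Real.exp (-k * en M r))) r := by
    intro r
    refine ((hasDerivAt_pow (n + 1) r).mul
      (((hasDerivAt_en hM r).const_mul (-k)).exp)).congr_deriv ?_
    rw [Nat.add_sub_cancel]
    push_cast
    ring
  have i1 := ((integrable_pow_exp hM hk n).const_mul ((n : ℝ) + 1)).integrableOn (s := Set.Ioi 0)
  have i2 := ((integrable_pow_div_exp hM hk (n + 2)).const_mul k).integrableOn (s := Set.Ioi 0)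
  have h := integral_Ioi_of_hasDerivAt_of_tendsto' (a := 0) (fun x _ => hd x) (i1.sub i2)
    (tendsto_zero_of_hasDerivAt_of_integrableOn_Ioi (a := 0) (fun x _ => hd x) (i1.sub i2)
      (integrable_pow_exp hM hk (n + 1)).integrableOn)
  rw [integral_sub i1 i2, integral_const_mul, integral_const_mul] at h
  simp at h
  simp only [neg_mul]
  linarith

/-- The integral defining `K_j (k M)`, under the substitution `l = k √(M² + r²)`. -/
lemma bessel_integral {M k : ℝ} (hM : 0 < M) (hk : 0 < k) (j : ℕ) :
    ∫ l in Set.Ioi (k * M), Real.exp (-l) * (l ^ 2 - (k * M) ^ 2) ^ ((j : ℝ) - 1 / 2)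
      = k ^ (2 * j) * ∫ r in Set.Ioi 0, r ^ (2 * j) / en M r * Real.exp (-k * en M r) := by
  have himg : (fun r => k * en M r) '' Set.Ioi 0 = Set.Ioi (k * M) := by
    ext l
    simp only [Set.mem_image, Set.mem_Ioi]
    constructor
    · rintro ⟨r, hr, rfl⟩
      gcongr
      exact Real.lt_sqrt_of_sq_lt (by nlinarith)
    · intro hl
      have h1 : M < l / k := by rw [lt_div_iff₀ hk]; linarith
      have h2 : 0 < (l / k) ^ 2 - M ^ 2 := by nlinarith
      refine ⟨√((l / k) ^ 2 - M ^ 2), Real.sqrt_pos.2 h2, ?_⟩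
      rw [en, Real.sq_sqrt h2.le, add_sub_cancel, Real.sqrt_sq (by linarith)]
      field_simp
  have hinj : Set.InjOn (fun r => k * en M r) (Set.Ioi 0) := by
    intro r hr s hs h
    have h1 : en M r = en M s := mul_left_cancel₀ hk.ne' h
    have h2 := en_sq M r
    rw [h1, en_sq] at h2
    exact (pow_left_inj₀ (le_of_lt hr) (le_of_lt hs) two_ne_zero).1 (by linarith)
  rw [← himg, integral_image_eq_integral_abs_deriv_smul measurableSet_Ioi
    (fun r _ => ((hasDerivAt_en hM r).const_mul k).hasDerivWithinAt) hinj, ← integral_const_mul]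
  refine setIntegral_congr_fun measurableSet_Ioi fun r hr => ?_
  have hr : 0 < r := hr
  have he := en_pos hM r
  have h1 : (k * en M r) ^ 2 - (k * M) ^ 2 = (k * r) ^ 2 := by
    rw [mul_pow, en_sq]; ring
  have h2 : ((k * r) ^ 2) ^ ((j : ℝ) - 1 / 2) = (k * r) ^ (2 * j) / (k * r) := by
    rw [← Real.rpow_natCast_mul (by positivity), show ((2 : ℕ) : ℝ) * ((j : ℝ) - 1 / 2)
      = ((2 * j : ℕ) : ℝ) - 1 by push_cast; ring, Real.rpow_sub_one (by positivity),
      Real.rpow_natCast]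
  simp only [smul_eq_mul]
  rw [h1, h2, abs_of_pos (by positivity), neg_mul, mul_pow k r (2 * j)]
  field_simp

/-! ### The Lorentz boost -/

/-- One-dimensional Lorentz boost with `a = cosh χ`, `b = sinh χ`. The substitution
`x ↦ a x + b p⁰` replaces the energy `p⁰` by `a p⁰ + b x`, and its Jacobian is the quotient of the
new energy by the old one. No integrability is needed. -/
lemma boost {M a b : ℝ} (hM : 0 < M) (ha : 0 < a) (hab : a ^ 2 - b ^ 2 = 1) (k : ℝ) :
    ∫ x : ℝ, en M x * x * Real.exp (k * (b * x - a * en M x))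
      = ∫ x : ℝ, (a * en M x + b * x) ^ 2 * (a * x + b * en M x) / en M x
          * Real.exp (-k * en M x) := by
  have hba : |b| < a := abs_lt_of_sq_lt_sq (by linarith) ha.le
  have hpos : ∀ x, 0 < a * en M x + b * x := by
    intro x
    have h1 : |b * x| ≤ |b| * en M x := by
      rw [abs_mul]; gcongr; exact abs_le_en M x
    have h2 : |b| * en M x < a * en M x := by have := en_pos hM x; gcongr
    linarith [neg_abs_le (b * x)]
  have hpos' : ∀ x, 0 < a * en M x - b * x := by
    intro x
    have := hpos (-x)
    have h : en M (-x) = en M x := by simp [en]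
    rw [h] at this; linarith
  have hen : ∀ x, en M (a * x + b * en M x) = a * en M x + b * x := by
    intro x
    rw [en, show M ^ 2 + (a * x + b * en M x) ^ 2 = (a * en M x + b * x) ^ 2 by
      linear_combination (b ^ 2 - a ^ 2) * en_sq M x - M ^ 2 * hab]
    exact Real.sqrt_sq (hpos x).le
  have hen' : ∀ x, en M (a * x - b * en M x) = a * en M x - b * x := by
    intro x
    rw [en, show M ^ 2 + (a * x - b * en M x) ^ 2 = (a * en M x - b * x) ^ 2 by
      linear_combination (b ^ 2 - a ^ 2) * en_sq M x - M ^ 2 * hab]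
    exact Real.sqrt_sq (hpos' x).le
  -- The inverse of the boost is the boost with `b` replaced by `-b`.
  have himg : (fun x => a * x + b * en M x) '' Set.univ = Set.univ := by
    rw [Set.image_univ, Set.range_eq_univ]
    intro y
    refine ⟨a * y - b * en M y, ?_⟩
    simp only [hen']
    linear_combination y * hab
  have hinj : Set.InjOn (fun x => a * x + b * en M x) Set.univ := by
    intro x _ y _ h
    simp only at h
    have h1 := hen x
    rw [h, hen y] at h1
    linear_combination a * h + b * h1 + (y - x) * hab
  have hd : ∀ x ∈ Set.univ, HasDerivWithinAt (fun x => a * x + b * en M x)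
      (a * 1 + b * (x / en M x)) Set.univ x := fun x _ =>
    (((hasDerivAt_id' x).const_mul a).add ((hasDerivAt_en hM x).const_mul b)).hasDerivWithinAt
  rw [← setIntegral_univ, ← himg,
    integral_image_eq_integral_abs_deriv_smul MeasurableSet.univ hd hinj, setIntegral_univ]
  refine integral_congr_ae (Filter.Eventually.of_forall fun x => ?_)
  have he := en_pos hM x
  have h1 : a * 1 + b * (x / en M x) = (a * en M x + b * x) / en M x := by field_simp
  simp only [smul_eq_mul, hen]
  rw [h1, abs_of_pos (div_pos (hpos x) he)]
  rw [show k * (b * (a * x + b * en M x) - a * (a * en M x + b * x)) = -k * en M x by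
    linear_combination (-k * en M x) * hab]
  ring

/-- Momentum space with its Euclidean norm, so that rotations and reflections are linear isometry
equivalences. -/
abbrev E3 := EuclideanSpace ℝ (Fin 3)

/-- Fubini in the form needed for the boost: equality of integrals along all lines parallel to the
first axis. -/
lemma integral_congr_slices {G H : E3 → ℝ} (hG : Integrable G) (hH : Integrable H)
    (h : ∀ y : Fin 2 → ℝ, ∫ x : ℝ, G (WithLp.toLp 2 (Fin.cons x y))
      = ∫ x : ℝ, H (WithLp.toLp 2 (Fin.cons x y))) : ∫ p, G p = ∫ p, H p := by
  let e : ℝ × (Fin 2 → ℝ) ≃ᵐ E3 :=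
    (MeasurableEquiv.piFinSuccAbove (fun _ : Fin 3 => ℝ) 0).symm.trans
      (MeasurableEquiv.toLp 2 (Fin 3 → ℝ))
  have he : MeasurePreserving e volume volume :=
    (PiLp.volume_preserving_toLp (Fin 3)).comp
      (volume_preserving_piFinSuccAbove (fun _ : Fin 3 => ℝ) 0).symm
  have hfub : ∀ F : E3 → ℝ, Integrable F →
      ∫ p, F p = ∫ y : Fin 2 → ℝ, ∫ x : ℝ, F (WithLp.toLp 2 (Fin.cons x y)) := by
    intro F hF
    rw [← he.integral_comp' F]
    have hFe : Integrable (fun z => F (e z)) := (he.integrable_comp_emb e.measurableEmbedding).2 hF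
    rw [Measure.volume_eq_prod] at hFe ⊢
    rw [integral_prod_symm _ hFe]
    refine integral_congr_ae (Filter.Eventually.of_forall fun y => ?_)
    refine integral_congr_ae (Filter.Eventually.of_forall fun x => ?_)
    change F (WithLp.toLp 2 (Fin.insertNth 0 x y)) = _
    rw [Fin.insertNth_zero']
  rw [hfub G hG, hfub H hH]
  exact integral_congr_ae (Filter.Eventually.of_forall h)

lemma integral_radial (f : ℝ → ℝ) :
    ∫ p : E3, f ‖p‖ = 4 * Real.pi * ∫ r in Set.Ioi 0, r ^ 2 * f r := by
  rw [integral_fun_norm_addHaar volume f, measureReal_def, EuclideanSpace.volume_ball_fin_three]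
  have h : 0 ≤ Real.pi * 4 / 3 := by positivity
  simp only [finrank_euclideanSpace, Fintype.card_fin, ENNReal.ofReal_one, one_pow, one_mul,
    ENNReal.toReal_ofReal h, nsmul_eq_mul, smul_eq_mul]
  push_cast
  ring

lemma continuous_en_norm (M : ℝ) : Continuous fun p : E3 => en M ‖p‖ :=
  (continuous_en M).comp continuous_norm

lemma abs_apply_le_en (M : ℝ) (p : E3) (i : Fin 3) : |p i| ≤ en M ‖p‖ := by
  have h1 : |p i| ≤ ‖p‖ := PiLp.norm_apply_le p i
  exact h1.trans ((le_abs_self _).trans (abs_le_en M _))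

lemma integrable_en_sq {M k : ℝ} (hM : 0 < M) (hk : 0 < k) :
    Integrable fun p : E3 => en M ‖p‖ ^ 2 * Real.exp (-k * en M ‖p‖) := by
  have hc := continuous_en_norm M
  refine integrable_of_bound volume hM hk 1 2
    (Continuous.aestronglyMeasurable (by fun_prop)) fun p => ?_
  rw [one_mul, abs_of_nonneg (by positivity)]

lemma integrable_apply_sq {M k : ℝ} (hM : 0 < M) (hk : 0 < k) (i : Fin 3) :
    Integrable fun p : E3 => p i ^ 2 * Real.exp (-k * en M ‖p‖) := by
  have hc := continuous_en_norm M
  refine integrable_of_bound volume hM hk 1 2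
    (Continuous.aestronglyMeasurable (by fun_prop)) fun p => ?_
  rw [one_mul, abs_of_nonneg (by positivity), ← sq_abs]
  gcongr
  exact abs_apply_le_en M p i

/-- The boost along the first axis in ℝ³. The right-hand side keeps only the terms of
`(a p⁰ + b p₁)² (a p₁ + b p⁰) / p⁰` that are even in `p`. -/
lemma boost3 {M a b k : ℝ} (hM : 0 < M) (hk : 0 < k) (ha : 0 < a) (hab : a ^ 2 - b ^ 2 = 1) :
    ∫ p : E3, en M ‖p‖ * p 0 * Real.exp (k * (b * p 0 - a * en M ‖p‖))
      = a ^ 2 * b * (∫ p : E3, en M ‖p‖ ^ 2 * Real.exp (-k * en M ‖p‖))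
        + (2 * a ^ 2 * b + b ^ 3) * ∫ p : E3, p 0 ^ 2 * Real.exp (-k * en M ‖p‖) := by
  have hc := continuous_en_norm M
  have hne : ∀ p : E3, en M ‖p‖ ≠ 0 := fun p => (en_pos hM _).ne'
  have hba : |b| < a := abs_lt_of_sq_lt_sq (by linarith) ha.le
  have hG : Integrable fun p : E3 =>
      en M ‖p‖ * p 0 * Real.exp (k * (b * p 0 - a * en M ‖p‖)) := by
    refine integrable_of_bound volume hM (mul_pos hk (sub_pos.2 hba)) 1 2
      (Continuous.aestronglyMeasurable (by fun_prop)) fun p => ?_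
    have he := en_pos hM ‖p‖
    have hp := abs_apply_le_en M p 0
    rw [one_mul, abs_mul, abs_mul, Real.abs_exp, abs_of_pos he, sq]
    have h1 : b * p 0 ≤ |b| * en M ‖p‖ :=
      (le_abs_self _).trans (by rw [abs_mul]; gcongr)
    have h2 : k * (b * p 0 - a * en M ‖p‖) ≤ -(k * (a - |b|)) * en M ‖p‖ := by
      linarith [mul_le_mul_of_nonneg_left h1 hk.le]
    gcongr
  set H : E3 → ℝ := fun p => (a * en M ‖p‖ + b * p 0) ^ 2 * (a * p 0 + b * en M ‖p‖) / en M ‖p‖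
    * Real.exp (-k * en M ‖p‖) with hHdef
  have hH : Integrable H := by
    refine integrable_of_bound volume hM hk ((a + |b|) ^ 3) 2
      (Continuous.aestronglyMeasurable (by fun_prop (disch := assumption))) fun p => ?_
    have he := en_pos hM ‖p‖
    have hp := abs_apply_le_en M p 0
    have h1 : |a * en M ‖p‖ + b * p 0| ≤ (a + |b|) * en M ‖p‖ := by
      refine (abs_add_le _ _).trans ?_
      rw [abs_mul, abs_mul, abs_of_pos ha, abs_of_pos he, add_mul]
      gcongr
    have h2 : |a * p 0 + b * en M ‖p‖| ≤ (a + |b|) * en M ‖p‖ := by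
      refine (abs_add_le _ _).trans ?_
      rw [abs_mul, abs_mul, abs_of_pos ha, abs_of_pos he, add_mul]
      gcongr
    rw [abs_mul, abs_div, abs_mul, abs_pow, Real.abs_exp, abs_of_pos he, ← mul_assoc]
    gcongr
    rw [div_le_iff₀ he]
    calc _ ≤ ((a + |b|) * en M ‖p‖) ^ 2 * ((a + |b|) * en M ‖p‖) := by gcongr
      _ = _ := by ring
  have hGH : ∫ p : E3, en M ‖p‖ * p 0 * Real.exp (k * (b * p 0 - a * en M ‖p‖))
      = ∫ p, H p := by
    refine integral_congr_slices hG hH fun y => ?_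
    -- On a slice, the transverse momentum `y` is absorbed into the mass parameter.
    have hn : ∀ x : ℝ, en M ‖(WithLp.toLp 2 (Fin.cons x y) : E3)‖
        = en (√(M ^ 2 + (y 0 ^ 2 + y 1 ^ 2))) x := by
      intro x
      rw [en, en, EuclideanSpace.real_norm_sq_eq, Real.sq_sqrt (by positivity)]
      congr 1
      rw [Fin.sum_univ_succ]
      simp only [Fin.cons_zero, Fin.cons_succ, Fin.sum_univ_two]
      ring
    simp only [hHdef, hn]
    exact boost (Real.sqrt_pos.2 (by positivity)) ha hab k
  have hsym : ∫ p, H (-p) = ∫ p, H p := integral_neg_eq_self H volume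
  have hHn : Integrable fun p => H (-p) := hH.comp_neg
  -- Averaging over `p ↦ -p` removes the odd terms.
  have hsum : ∫ p, H p + H (-p) = ∫ p : E3,
      (2 * (a ^ 2 * b) * (en M ‖p‖ ^ 2 * Real.exp (-k * en M ‖p‖))
        + 2 * (2 * a ^ 2 * b + b ^ 3) * (p 0 ^ 2 * Real.exp (-k * en M ‖p‖))) := by
    refine integral_congr_ae (Filter.Eventually.of_forall fun p => ?_)
    have he := hne p
    simp only [hHdef, norm_neg, PiLp.neg_apply]
    field_simp
    ring
  rw [integral_add hH hHn, hsym, integral_add ((integrable_en_sq hM hk).const_mul _)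
    ((integrable_apply_sq hM hk 0).const_mul _), integral_const_mul, integral_const_mul] at hsum
  rw [hGH]
  linarith

/-! ### Rest-frame moments -/

/-- The three coordinates are exchangeable under a radial weight. -/
lemma integral_apply_sq {M k : ℝ} (hM : 0 < M) (hk : 0 < k) :
    ∫ p : E3, p 0 ^ 2 * Real.exp (-k * en M ‖p‖)
      = 1 / 3 * ∫ p : E3, ‖p‖ ^ 2 * Real.exp (-k * en M ‖p‖) := by
  have h : ∀ j : Fin 3, ∫ p : E3, p j ^ 2 * Real.exp (-k * en M ‖p‖)
      = ∫ p : E3, p 0 ^ 2 * Real.exp (-k * en M ‖p‖) := by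
    intro j
    let S : E3 ≃ₗᵢ[ℝ] E3 := LinearIsometryEquiv.piLpCongrLeft 2 ℝ ℝ (Equiv.swap 0 j)
    rw [← S.measurePreserving.integral_comp S.toMeasurableEquiv.measurableEmbedding]
    refine integral_congr_ae (Filter.Eventually.of_forall fun p => ?_)
    have h1 : (S p) j = p 0 := by simp [S, LinearIsometryEquiv.piLpCongrLeft_apply, Equiv.piCongrLeft']
    simp only [h1, S.norm_map]
  have h2 : ∀ p : E3, ‖p‖ ^ 2 * Real.exp (-k * en M ‖p‖)
      = ∑ j, p j ^ 2 * Real.exp (-k * en M ‖p‖) := fun p => by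
    rw [EuclideanSpace.real_norm_sq_eq, Finset.sum_mul]
  simp only [h2]
  rw [integral_finsetSum _ fun j _ => integrable_apply_sq hM hk j]
  simp only [h, Finset.sum_const, Finset.card_univ, Fintype.card_fin, nsmul_eq_mul]
  push_cast
  ring

lemma moment_bessel_two {M k : ℝ} (hM : 0 < M) (hk : 0 < k) :
    ∫ p : E3, Real.exp (-k * en M ‖p‖)
      = 4 * Real.pi / k ^ 3 * ((k * M) ^ 2 * Kbessel 2 (k * M)) := by
  have h1 := radial_by_parts hM hk 2
  rw [integral_radial (fun r => Real.exp (-k * en M r)), Kbessel, bessel_integral hM hk 2,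
    zpow_neg, zpow_natCast]
  norm_num [Nat.factorial] at h1 ⊢
  field_simp at h1 ⊢
  linarith

lemma moment_bessel_three {M k : ℝ} (hM : 0 < M) (hk : 0 < k) :
    ∫ p : E3, ‖p‖ ^ 2 * Real.exp (-k * en M ‖p‖)
      = 4 * Real.pi / k ^ 5 * (3 * (k * M) ^ 3 * Kbessel 3 (k * M)) := by
  have h1 := radial_by_parts hM hk 4
  rw [integral_radial (fun r => r ^ 2 * Real.exp (-k * en M r)), Kbessel, bessel_integral hM hk 3,
    zpow_neg, zpow_natCast]
  simp only [← mul_assoc, ← pow_add]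
  norm_num [Nat.factorial] at h1 ⊢
  field_simp at h1 ⊢
  linarith

lemma moment_en_sq {M k : ℝ} (hM : 0 < M) (hk : 0 < k) :
    ∫ p : E3, en M ‖p‖ ^ 2 * Real.exp (-k * en M ‖p‖)
      = M ^ 2 * (∫ p : E3, Real.exp (-k * en M ‖p‖))
        + ∫ p : E3, ‖p‖ ^ 2 * Real.exp (-k * en M ‖p‖) := by
  have hc := continuous_en_norm M
  have i0 : Integrable fun p : E3 => Real.exp (-k * en M ‖p‖) :=
    integrable_of_bound volume hM hk 1 0
      (Continuous.aestronglyMeasurable (by fun_prop)) fun p => by simp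
  have i2 : Integrable fun p : E3 => ‖p‖ ^ 2 * Real.exp (-k * en M ‖p‖) := by
    refine integrable_of_bound volume hM hk 1 2
      (Continuous.aestronglyMeasurable (by fun_prop)) fun p => ?_
    rw [one_mul, abs_of_nonneg (by positivity)]
    gcongr
    exact (le_abs_self _).trans (abs_le_en M _)
  rw [← integral_const_mul, ← integral_add (i0.const_mul _) i2]
  refine integral_congr_ae (Filter.Eventually.of_forall fun p => ?_)
  simp only [en_sq]
  ring

/-- The required moment when the velocity points along the first axis. -/
lemma axis_moment {M a b k : ℝ} (hM : 0 < M) (hk : 0 < k) (ha : 0 < a)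
    (hab : a ^ 2 - b ^ 2 = 1) :
    ∫ p : E3, en M ‖p‖ * p 0 * Real.exp (k * (b * p 0 - a * en M ‖p‖))
      = 4 * Real.pi * M ^ 3 / k ^ 2 * b *
        ((5 * Kbessel 3 (k * M) + k * M * Kbessel 2 (k * M)) * a ^ 2
          + Kbessel 3 (k * M) * b ^ 2) := by
  rw [boost3 hM hk ha hab, integral_apply_sq hM hk, moment_en_sq hM hk, moment_bessel_two hM hk,
    moment_bessel_three hM hk]
  field_simp
  ring

/-! ### General directions -/

/-- The reflection in the plane orthogonal to `w` fixes `u` and changes the sign of the integrand. -/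
lemma transverse_moment (M A k : ℝ) {u w : E3} (h : inner ℝ u w = 0) :
    ∫ p : E3, en M ‖p‖ * inner ℝ p w * Real.exp (k * (inner ℝ u p - A * en M ‖p‖)) = 0 := by
  let S : E3 ≃ₗᵢ[ℝ] E3 := (ℝ ∙ w)ᗮ.reflection
  have hw : S w = -w := Submodule.reflection_orthogonalComplement_singleton_eq_neg w
  have hu : S u = u := Submodule.reflection_mem_subspace_eq_self
    (Submodule.mem_orthogonal_singleton_iff_inner_left.2 h)
  have h1 : ∀ p, inner ℝ (S p) w = -inner ℝ p w := fun p => by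
    rw [← neg_eq_iff_eq_neg, ← inner_neg_right, ← hw, S.inner_map_map]
  have h2 : ∀ p, inner ℝ u (S p) = inner ℝ u p := fun p => by
    conv_lhs => rw [← hu]
    exact S.inner_map_map u p
  have h3 := S.measurePreserving.integral_comp S.toMeasurableEquiv.measurableEmbedding
    fun p => en M ‖p‖ * inner ℝ p w * Real.exp (k * (inner ℝ u p - A * en M ‖p‖))
  simp only [h1, h2, S.norm_map, mul_neg, neg_mul, integral_neg] at h3
  linarith

/-- Reduction to `u` on the first axis, by a reflection carrying `‖u‖ e₁` to `u`. -/
lemma longitudinal_moment (M A k : ℝ) (u : E3) :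
    ∫ p : E3, en M ‖p‖ * inner ℝ p u * Real.exp (k * (inner ℝ u p - A * en M ‖p‖))
      = ‖u‖ * ∫ p : E3, en M ‖p‖ * p 0 * Real.exp (k * (‖u‖ * p 0 - A * en M ‖p‖)) := by
  set f : E3 := EuclideanSpace.single 0 ‖u‖ with hf
  let S : E3 ≃ₗᵢ[ℝ] E3 := (ℝ ∙ (f - u))ᗮ.reflection
  have hS : S f = u := Submodule.reflection_sub (by simp [hf])
  have hi : ∀ p, inner ℝ (S p) u = ‖u‖ * p 0 := fun p => by
    conv_lhs => rw [← hS]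
    rw [S.inner_map_map, hf, EuclideanSpace.inner_single_right]
    simp
  have hi' : ∀ p, inner ℝ u (S p) = ‖u‖ * p 0 := fun p => by rw [real_inner_comm, hi]
  rw [← S.measurePreserving.integral_comp S.toMeasurableEquiv.measurableEmbedding,
    ← integral_const_mul]
  refine integral_congr_ae (Filter.Eventually.of_forall fun p => ?_)
  simp only [hi, hi', S.norm_map]
  ring


lemma integrable_moment {M A k : ℝ} (hM : 0 < M) (hk : 0 < k) (u v : E3) (hA : ‖u‖ < A) :
    Integrable fun p : E3 =>
      en M ‖p‖ * inner ℝ p v * Real.exp (k * (inner ℝ u p - A * en M ‖p‖)) := by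
  have hc := continuous_en_norm M
  refine integrable_of_bound volume hM (mul_pos hk (sub_pos.2 hA)) ‖v‖ 2
    (Continuous.aestronglyMeasurable (by fun_prop)) fun p => ?_
  have he := en_pos hM ‖p‖
  have hp : ‖p‖ ≤ en M ‖p‖ := (le_abs_self _).trans (abs_le_en M _)
  have h0 : |inner ℝ p v| ≤ ‖v‖ * en M ‖p‖ :=
    (abs_real_inner_le_norm p v).trans (by rw [mul_comm]; gcongr)
  have h1 : inner ℝ u p ≤ ‖u‖ * en M ‖p‖ :=
    (real_inner_le_norm u p).trans (by gcongr)
  have h2 : k * (inner ℝ u p - A * en M ‖p‖) ≤ -(k * (A - ‖u‖)) * en M ‖p‖ := by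
    linarith [mul_le_mul_of_nonneg_left h1 hk.le]
  rw [abs_mul, abs_mul, Real.abs_exp, abs_of_pos he]
  calc _ ≤ en M ‖p‖ * (‖v‖ * en M ‖p‖) * Real.exp (-(k * (A - ‖u‖)) * en M ‖p‖) := by gcongr
    _ = _ := by ring

/-- The moment in an arbitrary direction `v`, split into its components along `u` and orthogonal
to `u`. -/
lemma moment {M c A θ : ℝ} (hM : 0 < M) (hc : 0 < c) (hθ : 0 < θ) (u v : E3) (hA0 : 0 < A)
    (hA : A ^ 2 = ‖u‖ ^ 2 + c ^ 2) :
    ∫ p : E3, en M ‖p‖ * inner ℝ p v * Real.exp (1 / θ * (inner ℝ u p - A * en M ‖p‖))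
      = inner ℝ u v * (4 * Real.pi * M ^ 3 * θ ^ 2 / c ^ 5 *
        ((5 * Kbessel 3 (c / θ * M) + c / θ * M * Kbessel 2 (c / θ * M)) * A ^ 2
          + Kbessel 3 (c / θ * M) * ‖u‖ ^ 2)) := by
  rcases eq_or_ne u 0 with rfl | hu
  · rw [transverse_moment M A (1 / θ) (inner_zero_left v), inner_zero_left, zero_mul]
  have hn : 0 < ‖u‖ := norm_pos_iff.2 hu
  have hA' : ‖u‖ < A := lt_of_pow_lt_pow_left₀ 2 hA0.le (by rw [hA]; linarith [pow_pos hc 2])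
  have hlong : ∫ p : E3, en M ‖p‖ * inner ℝ p u *
        Real.exp (1 / θ * (inner ℝ u p - A * en M ‖p‖))
      = ‖u‖ ^ 2 * (4 * Real.pi * M ^ 3 * θ ^ 2 / c ^ 5 *
        ((5 * Kbessel 3 (c / θ * M) + c / θ * M * Kbessel 2 (c / θ * M)) * A ^ 2
          + Kbessel 3 (c / θ * M) * ‖u‖ ^ 2)) := by
    have h1 := axis_moment (a := A / c) (b := ‖u‖ / c) hM (div_pos hc hθ) (div_pos hA0 hc)
      (by rw [div_pow, div_pow, hA]; field_simp; ring)
    have h2 : ∀ p : E3, c / θ * (‖u‖ / c * p 0 - A / c * en M ‖p‖)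
        = 1 / θ * (‖u‖ * p 0 - A * en M ‖p‖) := fun p => by field_simp
    simp only [h2] at h1
    rw [longitudinal_moment, h1]
    generalize Kbessel 3 (c / θ * M) = K3
    generalize Kbessel 2 (c / θ * M) = K2
    field_simp
  set t := inner ℝ u v / ‖u‖ ^ 2 with ht
  have hw : inner ℝ u (v - t • u) = 0 := by
    rw [inner_sub_right, inner_smul_right, real_inner_self_eq_norm_sq, ht]
    field_simp
    ring
  have h3 := transverse_moment M A (1 / θ) hw
  have h4 : ∀ p : E3, en M ‖p‖ * inner ℝ p (v - t • u) *
        Real.exp (1 / θ * (inner ℝ u p - A * en M ‖p‖))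
      = en M ‖p‖ * inner ℝ p v * Real.exp (1 / θ * (inner ℝ u p - A * en M ‖p‖))
        - t * (en M ‖p‖ * inner ℝ p u * Real.exp (1 / θ * (inner ℝ u p - A * en M ‖p‖))) := by
    intro p
    rw [inner_sub_right, inner_smul_right]
    ring
  simp only [h4] at h3
  have hθ' : 0 < 1 / θ := by positivity
  rw [integral_sub (integrable_moment hM hθ' u v hA')
    ((integrable_moment hM hθ' u u hA').const_mul t), integral_const_mul, hlong,
    sub_eq_zero] at h3
  rw [h3, ht]
  generalize 4 * Real.pi * M ^ 3 * θ ^ 2 / c ^ 5 * _ = X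
  field_simp

/-- For each `i`:
`c ∫ p⁰ p_i M(p) dp = [n₀m²/(γK₂(γ))][(5K₃(γ)+γK₂(γ))(u⁰)² u_i + K₃(γ)|u|² u_i]`. -/
theorem stmt13 (m c n₀ θ γ u0 : ℝ) (hm : 0 < m) (hc : 0 < c) (hn : 0 < n₀) (hθ : 0 < θ)
    (u : Fin 3 → ℝ) (hγ : γ = m * c ^ 2 / θ) (hu0 : u0 = Real.sqrt (dot3 u u + c ^ 2))
    (i : Fin 3) :
    c * ∫ p : Fin 3 → ℝ, pZero m c p * p i * Mloc m c n₀ θ u p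
      = n₀ * m ^ 2 / (γ * Kbessel 2 γ) *
          ((5 * Kbessel 3 γ + γ * Kbessel 2 γ) * u0 ^ 2 * u i
            + Kbessel 3 γ * dot3 u u * u i) := by
  have hinner : ∀ x y : E3, inner ℝ x y = dot3 x.ofLp y.ofLp := fun x y => by
    simp [dot3, PiLp.inner_apply, mul_comm]
  have hen : ∀ p : E3, en (m * c) ‖p‖ = pZero m c p.ofLp := fun p => by
    rw [en, pZero, ← hinner, real_inner_self_eq_norm_sq, mul_pow]
  have hu : dot3 u u = ‖(WithLp.toLp 2 u : E3)‖ ^ 2 := by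
    rw [← real_inner_self_eq_norm_sq, hinner]
  have hpi : ∀ p : E3, p i = inner ℝ p (EuclideanSpace.single i (1 : ℝ)) := fun p => by
    rw [EuclideanSpace.inner_single_right]
    simp
  have hpos : 0 < dot3 u u + c ^ 2 := by rw [hu]; positivity
  have hA0 : 0 < u0 := by rw [hu0]; exact Real.sqrt_pos.2 hpos
  have hA : u0 ^ 2 = ‖(WithLp.toLp 2 u : E3)‖ ^ 2 + c ^ 2 := by
    rw [hu0, Real.sq_sqrt hpos.le, hu]
  have hkM : c / θ * (m * c) = γ := by rw [hγ]; ring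
  have hγ0 : 0 < γ := by rw [hγ]; positivity
  have hθγ : θ = m * c ^ 2 / γ := by rw [hγ]; field_simp
  have hmom := moment (mul_pos hm hc) hc hθ (WithLp.toLp 2 u) (EuclideanSpace.single i 1) hA0 hA
  rw [hkM, ← hpi] at hmom
  have hint : ∫ p : Fin 3 → ℝ, pZero m c p * p i * Mloc m c n₀ θ u p
      = n₀ * γ / (4 * Real.pi * m ^ 3 * c ^ 3 * Kbessel 2 γ) *
        ∫ p : E3, en (m * c) ‖p‖ * inner ℝ p (EuclideanSpace.single i (1 : ℝ)) *
          Real.exp (1 / θ * (inner ℝ (WithLp.toLp 2 u) p - u0 * en (m * c) ‖p‖)) := by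
    rw [← integral_const_mul, ← (PiLp.volume_preserving_ofLp (Fin 3)).integral_comp
      (MeasurableEquiv.toLp 2 (Fin 3 → ℝ)).symm.measurableEmbedding]
    refine integral_congr_ae (Filter.Eventually.of_forall fun p => ?_)
    simp only [← hpi, hinner, hen, Mloc, ← hγ, ← hu0]
    rw [one_div, inv_mul_eq_div]
    ring
  rw [hint, hmom, hu, hθγ]
  -- `K₂(γ)⁻¹` is a common factor of both sides, so its nonvanishing plays no role.
  have hpull : ∀ x y : ℝ, x / (y * Kbessel 2 γ) = (Kbessel 2 γ)⁻¹ * (x / y) := fun x y => by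
    rw [mul_comm y, ← div_div, div_right_comm, div_eq_inv_mul]
  rw [hpull, hpull]
  generalize (Kbessel 2 γ)⁻¹ = X
  field_simp
end
end

section
/- Let m, c, n₀, θ > 0 and u ∈ ℝ³, and set γ = mc²/θ, u⁰ = √(|u|² + c²). Then for all i, j ∈ {1,2,3}, c ∫_{ℝ³} p_i p_j M(p) dp = [n₀ m² / (γ K₂(γ))] [ (6K₃(γ) + γK₂(γ)) u⁰ u_i u_j + c² δ_{ij} K₃(γ) u⁰ ], where δ_{ij} is the Kronecker delta. -/
/-!
The integral is moved to the rest frame of the fluid and evaluated there by symmetry.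

The substitution `p = boost m c u q` is the Lorentz boost with four-velocity `(u⁰, u)`, restricted
to the mass shell `p⁰ = √(m²c² + |p|²)`. It is a bijection of `ℝ³` (its inverse is the boost by
`-u`), and its derivative is the identity plus a rank-one map, whose determinant is `p⁰ / q⁰`
(`det_boost`); no rotation of `u` onto a coordinate axis is needed. The exponent becomes
`-(c/θ) q⁰` (`exponent_boost`), so `integral_boost` leaves `p_i p_j p⁰ / q⁰` integrated against an
isotropic weight, with `p` a function of `q`.

The weight is even in `q`, so only the even part of `p_i p_j p⁰ / q⁰` contributes, and there the
factor `1 / q⁰` cancels (`restIntegrand_add_neg`). What remains are the mass `∫ w` and the second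
moments `∫ q_a q_b w` of the rest-frame weight `w = exp(-(c/θ) q⁰)`. By reflections and
permutations of the axes the second moments are a multiple of the identity, and spherical
coordinates, an integration by parts and the substitution `l = (c/θ) √(m²c² + r²)`
(`radial_eq_bessel_integral`) give the mass and this multiple in terms of `K₂(γ)` and `K₃(γ)`.
Integrability holds throughout since `w` decays exponentially.
-/

noncomputable section

open MeasureTheory

open Set Filter Topology

/-! ### One-dimensional integrals and Bessel functions -/

lemma integrableOn_pow_mul_exp (n : ℕ) {k : ℝ} (hk : 0 < k) (b : ℝ) :
    IntegrableOn (fun r : ℝ => r ^ n * Real.exp (-(k * Real.sqrt (b ^ 2 + r ^ 2)))) (Ioi 0) := by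
  have h := integrableOn_rpow_mul_exp_neg_mul_rpow (p := 1) (s := n) (b := k)
    (by linarith [(Nat.cast_nonneg n : (0 : ℝ) ≤ n)]) one_pos hk
  refine Integrable.mono' h (by fun_prop) ?_
  filter_upwards [ae_restrict_mem measurableSet_Ioi] with r (hr : 0 < r)
  rw [Real.norm_of_nonneg (by positivity), Real.rpow_natCast, Real.rpow_one]
  gcongr
  have : r ≤ Real.sqrt (b ^ 2 + r ^ 2) := Real.le_sqrt_of_sq_le (by nlinarith [sq_nonneg b])
  nlinarith

/-- An integration by parts followed by the substitution `l = k √(b² + r²)` turns the radial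
moments of the rest-frame Maxwellian into the integrals that define the Bessel functions. -/
lemma radial_eq_bessel_integral (n : ℕ) {k b : ℝ} (hk : 0 < k) (hb : 0 < b) (s : ℝ)
    (hs : 2 * s = n + 1) :
    (n + 1) * ∫ r in Ioi (0 : ℝ), r ^ n * Real.exp (-(k * Real.sqrt (b ^ 2 + r ^ 2))) =
      (k ^ (n + 1))⁻¹ *
        ∫ l in Ioi (k * b), Real.exp (-l) * (l ^ 2 - (k * b) ^ 2) ^ s := by
  set E : ℝ → ℝ := fun r => k * Real.sqrt (b ^ 2 + r ^ 2) with hE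
  have hpos : ∀ r : ℝ, 0 < b ^ 2 + r ^ 2 := fun r => by positivity
  have hder : ∀ r, HasDerivAt E (k * (r / Real.sqrt (b ^ 2 + r ^ 2))) r := by
    intro r
    have h1 : HasDerivAt (fun r : ℝ => b ^ 2 + r ^ 2) (2 * r) r := by
      simpa using (hasDerivAt_pow 2 r).const_add (b ^ 2)
    have h2 := (h1.sqrt (hpos r).ne').const_mul k
    exact h2.congr_deriv (by rw [mul_div_mul_left _ _ two_ne_zero])
  have hEsq : ∀ r, E r ^ 2 = k ^ 2 * (b ^ 2 + r ^ 2) := fun r => by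
    simp only [hE, mul_pow, Real.sq_sqrt (hpos r).le]
  have hEpos : ∀ r, 0 < E r := fun r => mul_pos hk (Real.sqrt_pos.2 (hpos r))
  have himg : E '' Ioi 0 = Ioi (k * b) := by
    ext l
    constructor
    · rintro ⟨r, hr, rfl⟩
      have hr' : 0 < r := hr
      exact mul_lt_mul_of_pos_left (Real.lt_sqrt_of_sq_lt (by nlinarith)) hk
    · intro hl
      have hl' : k * b < l := hl
      have hl0 : 0 < l := (mul_pos hk hb).trans hl'
      have hbl : b < l / k := by rw [lt_div_iff₀ hk]; linarith
      refine ⟨Real.sqrt ((l / k) ^ 2 - b ^ 2), Real.sqrt_pos.2 (by nlinarith), ?_⟩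
      simp only [hE]
      rw [Real.sq_sqrt (by nlinarith), add_sub_cancel, Real.sqrt_sq (by positivity)]
      field_simp
  have hinj : InjOn E (Ioi 0) := by
    intro x hx y hy hxy
    have h := congrArg (· ^ 2) hxy
    simp only [hEsq] at h
    have h2 : x ^ 2 = y ^ 2 := by
      have := mul_left_cancel₀ (by positivity) h
      linarith
    exact (sq_eq_sq₀ (le_of_lt hx) (le_of_lt hy)).1 h2
  have hcov := integral_image_eq_integral_abs_deriv_smul measurableSet_Ioi
    (fun x _ => (hder x).hasDerivWithinAt) hinj
    (fun l => Real.exp (-l) * (l ^ 2 - (k * b) ^ 2) ^ s)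
  rw [himg] at hcov
  have hcov' : ∫ l in Ioi (k * b), Real.exp (-l) * (l ^ 2 - (k * b) ^ 2) ^ s =
      ∫ r in Ioi (0 : ℝ), k ^ (n + 1) * (r ^ (n + 1) *
        (k * (r / Real.sqrt (b ^ 2 + r ^ 2)) * Real.exp (-E r))) := by
    rw [hcov]
    refine setIntegral_congr_fun measurableSet_Ioi fun r hr => ?_
    have hr' : 0 < r := hr
    have hsq : E r ^ 2 - (k * b) ^ 2 = (k * r) ^ 2 := by rw [hEsq]; ring
    have hpow : ((k * r) ^ 2) ^ s = (k * r) ^ (n + 1) := by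
      rw [← Real.rpow_natCast (k * r) 2, ← Real.rpow_mul (by positivity), Nat.cast_ofNat, hs,
        ← Nat.cast_add_one, Real.rpow_natCast]
    simp only [smul_eq_mul]
    rw [hsq, hpow, abs_of_nonneg (by positivity)]
    ring
  have hi1 : IntegrableOn (fun r : ℝ => r ^ n * Real.exp (-E r)) (Ioi 0) :=
    integrableOn_pow_mul_exp n hk b
  have hi2 : IntegrableOn (fun r : ℝ => r ^ (n + 1) *
      (k * (r / Real.sqrt (b ^ 2 + r ^ 2)) * Real.exp (-E r))) (Ioi 0) := by
    refine Integrable.mono' ((integrableOn_pow_mul_exp (n + 1) hk b).const_mul k) ?_ ?_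
    · refine Measurable.aestronglyMeasurable ?_
      simp only [hE]
      fun_prop
    · filter_upwards [ae_restrict_mem measurableSet_Ioi] with r (hr : 0 < r)
      rw [Real.norm_of_nonneg (by positivity)]
      have : r / Real.sqrt (b ^ 2 + r ^ 2) ≤ 1 := by
        rw [div_le_one (Real.sqrt_pos.2 (hpos r))]
        exact Real.le_sqrt_of_sq_le (by nlinarith [sq_nonneg b])
      have h3 : 0 < k * (r ^ (n + 1) * Real.exp (-E r)) := by positivity
      calc _ = (r / Real.sqrt (b ^ 2 + r ^ 2)) * (k * (r ^ (n + 1) * Real.exp (-E r))) := by ring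
        _ ≤ 1 * (k * (r ^ (n + 1) * Real.exp (-E r))) := by gcongr
        _ = _ := one_mul _
  have hlim : Tendsto (fun r : ℝ => r ^ (n + 1) * Real.exp (-E r)) atTop (𝓝 0) := by
    have h1 : Tendsto (fun r : ℝ => (k * r) ^ (n + 1) * Real.exp (-(k * r))) atTop (𝓝 0) :=
      (Real.tendsto_pow_mul_exp_neg_atTop_nhds_zero (n + 1)).comp
        (tendsto_id.const_mul_atTop hk)
    have h2 := h1.const_mul ((k ^ (n + 1))⁻¹)
    rw [mul_zero] at h2
    refine squeeze_zero' ?_ ?_ h2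
    · filter_upwards [eventually_gt_atTop 0] with r hr
      positivity
    · filter_upwards [eventually_gt_atTop 0] with r hr
      have hle : k * r ≤ E r :=
        mul_le_mul_of_nonneg_left (Real.le_sqrt_of_sq_le (by nlinarith [sq_nonneg b])) hk.le
      calc r ^ (n + 1) * Real.exp (-E r) ≤ r ^ (n + 1) * Real.exp (-(k * r)) := by gcongr
        _ = _ := by rw [mul_pow]; field_simp
  have hparts := integral_Ioi_of_hasDerivAt_of_tendsto' (a := (0 : ℝ))
    (f := fun r : ℝ => r ^ (n + 1) * Real.exp (-E r))
    (f' := fun r => (n + 1) * (r ^ n * Real.exp (-E r)) - r ^ (n + 1) *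
      (k * (r / Real.sqrt (b ^ 2 + r ^ 2)) * Real.exp (-E r)))
    (fun r _ => by
      have := (hasDerivAt_pow (n + 1) r).mul (hder r).neg.exp
      refine this.congr_deriv ?_
      simp only [Pi.neg_apply]
      push_cast
      ring)
    ((hi1.const_mul _).sub hi2) hlim
  rw [integral_sub (hi1.const_mul _) hi2, integral_const_mul] at hparts
  rw [hcov', integral_const_mul, inv_mul_cancel_left₀ (by positivity)]
  simp only [ne_eq, Nat.add_eq_zero_iff, one_ne_zero, and_false, not_false_eq_true, zero_pow,
    zero_mul, sub_zero] at hparts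
  linarith

/-! ### Radial integrals on `ℝ³` -/

lemma sqrt_dot3_self (x : EuclideanSpace ℝ (Fin 3)) :
    Real.sqrt (dot3 x.ofLp x.ofLp) = ‖x‖ := by
  rw [EuclideanSpace.norm_eq]
  simp [dot3, pow_two]

/-- Spherical coordinates for a radial integrand on `ℝ³`; the norm of `Fin 3 → ℝ` is the sup norm,
so the radius is written `√(dot3 q q)`. -/
lemma integral_radial_s14 (f : ℝ → ℝ) :
    ∫ q : Fin 3 → ℝ, f (Real.sqrt (dot3 q q)) =
      4 * Real.pi * ∫ r in Ioi (0 : ℝ), r ^ 2 * f r := by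
  rw [← (EuclideanSpace.volume_preserving_symm_measurableEquiv_toLp (Fin 3)).integral_comp
    (MeasurableEquiv.measurableEmbedding _)]
  have h : ∀ x : EuclideanSpace ℝ (Fin 3),
      f (Real.sqrt (dot3 ((MeasurableEquiv.toLp 2 (Fin 3 → ℝ)).symm x)
        ((MeasurableEquiv.toLp 2 (Fin 3 → ℝ)).symm x))) = f ‖x‖ := fun x => by
    rw [← sqrt_dot3_self]; rfl
  simp_rw [h]
  rw [integral_fun_norm_addHaar]
  have hv : (volume : Measure (EuclideanSpace ℝ (Fin 3))).real (Metric.ball 0 1) =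
      Real.pi * 4 / 3 := by
    rw [Measure.real, EuclideanSpace.volume_ball_fin_three]
    simp only [ENNReal.ofReal_one, one_pow, one_mul]
    exact ENNReal.toReal_ofReal (by positivity)
  rw [hv]
  simp
  ring

lemma integrable_radial {f : ℝ → ℝ} (hf : IntegrableOn (fun r => r ^ 2 * f r) (Ioi 0)) :
    Integrable (fun q : Fin 3 → ℝ => f (Real.sqrt (dot3 q q))) := by
  rw [← (EuclideanSpace.volume_preserving_symm_measurableEquiv_toLp (Fin 3)).integrable_comp_emb
    (MeasurableEquiv.measurableEmbedding _)]
  have h : (fun q : Fin 3 → ℝ => f (Real.sqrt (dot3 q q))) ∘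
      (MeasurableEquiv.toLp 2 (Fin 3 → ℝ)).symm =
      fun x : EuclideanSpace ℝ (Fin 3) => f ‖x‖ := by
    ext x
    rw [← sqrt_dot3_self]; rfl
  rw [h, integrable_fun_norm_addHaar]
  simpa using hf

lemma dot3_self_nonneg (q : Fin 3 → ℝ) : 0 ≤ dot3 q q :=
  Finset.sum_nonneg fun i _ => mul_self_nonneg (q i)

lemma pZero_eq (m c : ℝ) (q : Fin 3 → ℝ) :
    pZero m c q = Real.sqrt ((m * c) ^ 2 + Real.sqrt (dot3 q q) ^ 2) := by
  rw [Real.sq_sqrt (dot3_self_nonneg q), pZero, mul_pow]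

lemma pZero_sq (m c : ℝ) (q : Fin 3 → ℝ) : pZero m c q ^ 2 = (m * c) ^ 2 + dot3 q q := by
  rw [pZero, Real.sq_sqrt (by have := dot3_self_nonneg q; positivity), mul_pow]

lemma pZero_pos {m c : ℝ} (hm : 0 < m) (hc : 0 < c) (q : Fin 3 → ℝ) : 0 < pZero m c q :=
  Real.sqrt_pos.2 (by have := dot3_self_nonneg q; positivity)

lemma continuous_dot3 (u : Fin 3 → ℝ) : Continuous (fun q => dot3 u q) := by
  unfold dot3; fun_prop

lemma continuous_pZero (m c : ℝ) : Continuous (pZero m c) := by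
  unfold pZero dot3; fun_prop

/-! ### Moments of the rest-frame Maxwellian -/

section Moments

variable {m c k : ℝ}

lemma integrable_exp_pZero (hk : 0 < k) :
    Integrable fun q : Fin 3 → ℝ => Real.exp (-(k * pZero m c q)) := by
  simp_rw [pZero_eq]
  exact integrable_radial (f := fun r => Real.exp (-(k * Real.sqrt ((m * c) ^ 2 + r ^ 2))))
    (integrableOn_pow_mul_exp 2 hk _)

lemma integrable_sq_mul_exp_pZero (hk : 0 < k) :
    Integrable fun q : Fin 3 → ℝ => dot3 q q * Real.exp (-(k * pZero m c q)) := by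
  have h := integrable_radial
    (f := fun r => r ^ 2 * Real.exp (-(k * Real.sqrt ((m * c) ^ 2 + r ^ 2)))) (by
      simpa only [← mul_assoc, ← pow_add] using integrableOn_pow_mul_exp 4 hk (m * c))
  refine h.congr (ae_of_all _ fun q => ?_)
  dsimp only
  rw [pZero_eq, Real.sq_sqrt (dot3_self_nonneg q)]

lemma integral_exp_pZero (hm : 0 < m) (hc : 0 < c) (hk : 0 < k) :
    ∫ q : Fin 3 → ℝ, Real.exp (-(k * pZero m c q)) =
      4 * Real.pi * (m * c) ^ 2 / k * Kbessel 2 (k * (m * c)) := by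
  simp_rw [pZero_eq]
  rw [integral_radial_s14 (fun r => Real.exp (-(k * Real.sqrt ((m * c) ^ 2 + r ^ 2))))]
  have h := radial_eq_bessel_integral 2 hk (mul_pos hm hc) (2 - 1 / 2) (by norm_num)
  rw [Kbessel]
  push_cast at h ⊢
  set A := ∫ r in Ioi (0 : ℝ), r ^ 2 * Real.exp (-(k * Real.sqrt ((m * c) ^ 2 + r ^ 2)))
  set B := ∫ l in Ioi (k * (m * c)), Real.exp (-l) * (l ^ 2 - (k * (m * c)) ^ 2) ^ ((2 : ℝ) - 1 / 2)
  have hA : A = (k ^ 3)⁻¹ * B / 3 := by norm_num at h; linarith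
  rw [hA, zpow_neg]
  norm_num [Nat.factorial]
  field_simp

lemma integral_sq_mul_exp_pZero (hm : 0 < m) (hc : 0 < c) (hk : 0 < k) :
    ∫ q : Fin 3 → ℝ, dot3 q q * Real.exp (-(k * pZero m c q)) =
      3 * (4 * Real.pi * (m * c) ^ 3 / k ^ 2 * Kbessel 3 (k * (m * c))) := by
  have h0 : ∀ q : Fin 3 → ℝ, dot3 q q * Real.exp (-(k * pZero m c q)) =
      (fun r => r ^ 2 * Real.exp (-(k * Real.sqrt ((m * c) ^ 2 + r ^ 2))))
        (Real.sqrt (dot3 q q)) := fun q => by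
    dsimp only
    rw [pZero_eq, Real.sq_sqrt (dot3_self_nonneg q)]
  simp_rw [h0]
  rw [integral_radial_s14 (fun r => r ^ 2 * Real.exp (-(k * Real.sqrt ((m * c) ^ 2 + r ^ 2))))]
  have h := radial_eq_bessel_integral 4 hk (mul_pos hm hc) (3 - 1 / 2) (by norm_num)
  rw [Kbessel]
  have hr : ∀ r : ℝ, r ^ 2 * (r ^ 2 * Real.exp (-(k * Real.sqrt ((m * c) ^ 2 + r ^ 2)))) =
      r ^ 4 * Real.exp (-(k * Real.sqrt ((m * c) ^ 2 + r ^ 2))) := fun r => by ring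
  simp_rw [hr]
  push_cast at h ⊢
  have he : (3 : ℝ) - 1 / 2 = 5 / 2 := by norm_num
  norm_num only at h
  rw [he]
  set A := ∫ r in Ioi (0 : ℝ), r ^ 4 * Real.exp (-(k * Real.sqrt ((m * c) ^ 2 + r ^ 2)))
  set B := ∫ l in Ioi (k * (m * c)), Real.exp (-l) * (l ^ 2 - (k * (m * c)) ^ 2) ^ ((5 : ℝ) / 2)
  have hA : A = (k ^ 5)⁻¹ * B / 5 := by linarith
  rw [hA, zpow_neg]
  norm_num [Nat.factorial]
  field_simp
  ring

lemma abs_mul_le_dot3_self (q : Fin 3 → ℝ) (a b : Fin 3) : |q a * q b| ≤ dot3 q q := by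
  have hle : ∀ i, q i ^ 2 ≤ dot3 q q := fun i => by
    rw [pow_two]
    exact Finset.single_le_sum (f := fun i => q i * q i) (fun i _ => mul_self_nonneg (q i))
      (Finset.mem_univ i)
  rw [abs_mul]
  nlinarith [hle a, hle b, sq_nonneg (|q a| - |q b|), sq_abs (q a), sq_abs (q b)]

lemma integrable_mul_mul_exp_pZero (hk : 0 < k) (a b : Fin 3) :
    Integrable fun q : Fin 3 → ℝ => q a * q b * Real.exp (-(k * pZero m c q)) := by
  refine (integrable_sq_mul_exp_pZero (m := m) (c := c) hk).mono' ?_ (ae_of_all _ fun q => ?_)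
  · have := continuous_pZero m c
    exact Continuous.aestronglyMeasurable (by fun_prop)
  · rw [norm_mul, Real.norm_eq_abs, Real.norm_of_nonneg (Real.exp_pos _).le]
    gcongr
    exact abs_mul_le_dot3_self q a b

/-- Off-diagonal second moments vanish, by the reflection `q a ↦ -q a`. -/
lemma integral_mul_mul_exp_pZero_of_ne {a b : Fin 3} (hab : a ≠ b) :
    ∫ q : Fin 3 → ℝ, q a * q b * Real.exp (-(k * pZero m c q)) = 0 := by
  have hmp : MeasurePreserving
      (fun (q : Fin 3 → ℝ) i => (if i = a then (fun x : ℝ => -x) else id) (q i)) := by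
    refine volume_preserving_pi fun i => ?_
    split_ifs
    · exact Measure.measurePreserving_neg volume
    · exact MeasurePreserving.id volume
  set T : (Fin 3 → ℝ) → (Fin 3 → ℝ) :=
    fun q i => (if i = a then (fun x : ℝ => -x) else id) (q i) with hT
  have hinv : Function.Involutive T := by
    intro q
    ext i
    by_cases h : i = a <;> simp [hT, h]
  have hemb : MeasurableEmbedding T :=
    (MeasurableEquiv.ofInvolutive T hinv hmp.measurable).measurableEmbedding
  have h := hmp.integral_comp hemb
    (fun q : Fin 3 → ℝ => q a * q b * Real.exp (-(k * pZero m c q)))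
  have hd : ∀ q, dot3 (T q) (T q) = dot3 q q := fun q =>
    Finset.sum_congr rfl fun i _ => by by_cases h : i = a <;> simp [hT, h]
  have hp : ∀ q, pZero m c (T q) = pZero m c q := fun q => by rw [pZero, pZero, hd]
  have hc : ∀ q, T q a * T q b = -(q a * q b) := fun q => by simp [hT, hab.symm]
  simp only [hp, hc, neg_mul, integral_neg] at h
  linarith

/-- The second moment is the same along each axis, by permutation of the coordinates. -/
lemma integral_mul_self_mul_exp_pZero (a b : Fin 3) :
    ∫ q : Fin 3 → ℝ, q a * q a * Real.exp (-(k * pZero m c q)) =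
      ∫ q : Fin 3 → ℝ, q b * q b * Real.exp (-(k * pZero m c q)) := by
  have h := (volume_measurePreserving_piCongrLeft (fun _ : Fin 3 => ℝ)
    (Equiv.swap a b)).integral_comp (MeasurableEquiv.measurableEmbedding _)
    (fun q : Fin 3 → ℝ => q b * q b * Real.exp (-(k * pZero m c q)))
  rw [← h]
  have hc : ∀ (q : Fin 3 → ℝ) i,
      MeasurableEquiv.piCongrLeft (fun _ : Fin 3 => ℝ) (Equiv.swap a b) q (Equiv.swap a b i) =
        q i := fun q i =>
    MeasurableEquiv.piCongrLeft_apply_apply (Equiv.swap a b) (β := fun _ => ℝ) q i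
  have hb : ∀ q : Fin 3 → ℝ,
      MeasurableEquiv.piCongrLeft (fun _ : Fin 3 => ℝ) (Equiv.swap a b) q b = q a := fun q => by
    simpa using hc q a
  have hp : ∀ q : Fin 3 → ℝ,
      pZero m c (MeasurableEquiv.piCongrLeft (fun _ : Fin 3 => ℝ) (Equiv.swap a b) q) =
        pZero m c q := fun q => by
    have hd := Equiv.sum_comp (Equiv.swap a b) fun i =>
      MeasurableEquiv.piCongrLeft (fun _ : Fin 3 => ℝ) (Equiv.swap a b) q i *
        MeasurableEquiv.piCongrLeft (fun _ : Fin 3 => ℝ) (Equiv.swap a b) q i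
    simp only [hc] at hd
    rw [pZero, pZero, dot3, dot3, hd]
  simp only [hb, hp]

/-- The rest-frame Maxwellian is isotropic: its second moments form a multiple of the identity. -/
lemma integral_mul_mul_exp_pZero (hm : 0 < m) (hc : 0 < c) (hk : 0 < k) (a b : Fin 3) :
    ∫ q : Fin 3 → ℝ, q a * q b * Real.exp (-(k * pZero m c q)) =
      if a = b then 4 * Real.pi * (m * c) ^ 3 / k ^ 2 * Kbessel 3 (k * (m * c)) else 0 := by
  split_ifs with hab
  · subst hab
    have h := integral_sq_mul_exp_pZero hm hc hk
    simp only [dot3, Finset.sum_mul] at h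
    rw [integral_finsetSum _ fun i _ => integrable_mul_mul_exp_pZero hk i i,
      Fin.sum_univ_three, integral_mul_self_mul_exp_pZero 0 a, integral_mul_self_mul_exp_pZero 1 a,
      integral_mul_self_mul_exp_pZero 2 a] at h
    linarith
  · exact integral_mul_mul_exp_pZero_of_ne hab

lemma dot3_mul_dot3 (A B q : Fin 3 → ℝ) (w : ℝ) :
    dot3 A q * dot3 B q * w = ∑ a, ∑ b, A a * B b * (q a * q b * w) := by
  simp only [dot3, Fin.sum_univ_three]
  ring

lemma integrable_dot3_mul_dot3 (hk : 0 < k) (A B : Fin 3 → ℝ) :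
    Integrable fun q : Fin 3 → ℝ => dot3 A q * dot3 B q * Real.exp (-(k * pZero m c q)) := by
  simp_rw [dot3_mul_dot3]
  exact integrable_finsetSum _ fun a _ => integrable_finsetSum _ fun b _ =>
    (integrable_mul_mul_exp_pZero hk a b).const_mul _

lemma integral_dot3_mul_dot3 (hm : 0 < m) (hc : 0 < c) (hk : 0 < k) (A B : Fin 3 → ℝ) :
    ∫ q : Fin 3 → ℝ, dot3 A q * dot3 B q * Real.exp (-(k * pZero m c q)) =
      dot3 A B * (4 * Real.pi * (m * c) ^ 3 / k ^ 2 * Kbessel 3 (k * (m * c))) := by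
  simp_rw [dot3_mul_dot3]
  have hi := fun a b => (integrable_mul_mul_exp_pZero (m := m) (c := c) hk a b).const_mul (A a * B b)
  rw [integral_finsetSum _ fun a _ => integrable_finsetSum _ fun b _ => hi a b]
  simp_rw [integral_finsetSum _ fun b _ => hi _ b, integral_const_mul,
    integral_mul_mul_exp_pZero hm hc hk]
  simp [dot3, Finset.sum_mul]

end Moments

/-! ### The Lorentz boost as a change of variables -/

lemma dot3_comm (p q : Fin 3 → ℝ) : dot3 p q = dot3 q p := by
  simp only [dot3, mul_comm]

lemma dot3_add_right (p q r : Fin 3 → ℝ) : dot3 p (q + r) = dot3 p q + dot3 p r := by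
  simp only [dot3, Pi.add_apply, mul_add, Finset.sum_add_distrib]

lemma dot3_add_left (p q r : Fin 3 → ℝ) : dot3 (p + q) r = dot3 p r + dot3 q r := by
  simp only [dot3_comm _ r, dot3_add_right]

lemma dot3_smul_right (t : ℝ) (p q : Fin 3 → ℝ) : dot3 p (t • q) = t * dot3 p q := by
  simp only [dot3, Pi.smul_apply, smul_eq_mul, Finset.mul_sum]
  exact Finset.sum_congr rfl fun i _ => by ring

lemma dot3_smul_left (t : ℝ) (p q : Fin 3 → ℝ) : dot3 (t • p) q = t * dot3 p q := by
  rw [dot3_comm, dot3_smul_right, dot3_comm]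

lemma dot3_neg_right (p q : Fin 3 → ℝ) : dot3 p (-q) = -dot3 p q := by
  simp only [dot3, Pi.neg_apply, mul_neg, Finset.sum_neg_distrib]

lemma dot3_neg_left (p q : Fin 3 → ℝ) : dot3 (-p) q = -dot3 p q := by
  rw [dot3_comm, dot3_neg_right, dot3_comm]

lemma dot3_single_left (i : Fin 3) (q : Fin 3 → ℝ) : dot3 (Pi.single i 1) q = q i := by
  simp [dot3, Pi.single_apply]

lemma dot3_sq_le (p q : Fin 3 → ℝ) : dot3 p q ^ 2 ≤ dot3 p p * dot3 q q := by
  have h := Finset.sum_mul_sq_le_sq_mul_sq Finset.univ p q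
  simpa only [dot3, pow_two] using h

/-- The time component `u⁰` of the four-velocity whose spatial part is `u`. -/
def uZero (c : ℝ) (u : Fin 3 → ℝ) : ℝ := Real.sqrt (dot3 u u + c ^ 2)

/-- Spatial part of the Lorentz boost taking the rest frame to the frame moving with four-velocity
`(u⁰, u)`, acting on the mass shell parametrised by the spatial momentum `q`. -/
def boost_s14 (m c : ℝ) (u q : Fin 3 → ℝ) : Fin 3 → ℝ :=
  q + (dot3 u q / (c * (c + uZero c u)) + pZero m c q / c) • u

lemma uZero_pos {c : ℝ} (hc : 0 < c) (u : Fin 3 → ℝ) : 0 < uZero c u :=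
  Real.sqrt_pos.2 (by have := dot3_self_nonneg u; positivity)

lemma dot3_self_eq (c : ℝ) (u : Fin 3 → ℝ) : dot3 u u = uZero c u ^ 2 - c ^ 2 := by
  rw [uZero, Real.sq_sqrt (by have := dot3_self_nonneg u; positivity)]
  ring

lemma abs_dot3_lt {m c : ℝ} (hm : 0 < m) (hc : 0 < c) (u q : Fin 3 → ℝ) :
    |dot3 u q| < uZero c u * pZero m c q := by
  refine abs_lt_of_sq_lt_sq ?_ (mul_pos (uZero_pos hc u) (pZero_pos hm hc q)).le
  rw [mul_pow, pZero_sq]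
  have h1 := dot3_sq_le u q
  have h2 : uZero c u ^ 2 = dot3 u u + c ^ 2 := by rw [dot3_self_eq c]; ring
  have h3 := dot3_self_nonneg u
  have h4 := dot3_self_nonneg q
  rw [h2]
  have h5 : 0 < c ^ 2 * (m * c) ^ 2 := by positivity
  nlinarith [mul_nonneg h3 (sq_nonneg (m * c)), mul_nonneg (sq_nonneg c) h4]

lemma energy_pos {m c : ℝ} (hm : 0 < m) (hc : 0 < c) (u q : Fin 3 → ℝ) :
    0 < uZero c u * pZero m c q + dot3 u q := by
  have := (abs_lt.1 (abs_dot3_lt hm hc u q)).1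
  linarith

/-- Energy transforms as the time component of a four-vector; this is the mass-shell condition for
the boosted momentum. -/
lemma pZero_boost {m c : ℝ} (hm : 0 < m) (hc : 0 < c) (u q : Fin 3 → ℝ) :
    pZero m c (boost_s14 m c u q) = (uZero c u * pZero m c q + dot3 u q) / c := by
  have hU := uZero_pos hc u
  have hs := dot3_self_eq c u
  have hP := pZero_sq m c q
  have hE := energy_pos hm hc u q
  rw [← sq_eq_sq₀ (pZero_pos hm hc _).le (by positivity), pZero_sq, boost_s14]
  simp only [dot3_add_right, dot3_add_left, dot3_smul_right, dot3_smul_left, dot3_comm q u]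
  rw [hs, show dot3 q q = pZero m c q ^ 2 - (m * c) ^ 2 by rw [hP]; ring]
  field_simp
  ring

lemma dot3_boost {m c : ℝ} (hc : 0 < c) (u q : Fin 3 → ℝ) :
    dot3 u (boost_s14 m c u q) =
      (uZero c u * dot3 u q + (uZero c u ^ 2 - c ^ 2) * pZero m c q) / c := by
  have hU := uZero_pos hc u
  rw [boost_s14]
  simp only [dot3_add_right, dot3_smul_right]
  rw [dot3_self_eq c u]
  field_simp
  ring

lemma uZero_neg (c : ℝ) (u : Fin 3 → ℝ) : uZero c (-u) = uZero c u := by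
  rw [uZero, uZero, dot3_neg_left, dot3_neg_right, neg_neg]

lemma boost_neg_boost {m c : ℝ} (hm : 0 < m) (hc : 0 < c) (u q : Fin 3 → ℝ) :
    boost_s14 m c (-u) (boost_s14 m c u q) = q := by
  have hU := uZero_pos hc u
  have hcoef : dot3 (-u) (boost_s14 m c u q) / (c * (c + uZero c (-u))) +
      pZero m c (boost_s14 m c u q) / c =
      dot3 u q / (c * (c + uZero c u)) + pZero m c q / c := by
    rw [dot3_neg_left, uZero_neg, dot3_boost hc, pZero_boost hm hc]
    field_simp
    ring
  rw [boost_s14, hcoef, boost_s14, smul_neg, add_neg_cancel_right]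

lemma boost_injective {m c : ℝ} (hm : 0 < m) (hc : 0 < c) (u : Fin 3 → ℝ) :
    Function.Injective (boost_s14 m c u) :=
  Function.LeftInverse.injective (boost_neg_boost hm hc u)

lemma boost_surjective {m c : ℝ} (hm : 0 < m) (hc : 0 < c) (u : Fin 3 → ℝ) :
    Function.Surjective (boost_s14 m c u) := fun q =>
  ⟨boost_s14 m c (-u) q, by simpa using boost_neg_boost hm hc (-u) q⟩

/-- The linear form `q ↦ dot3 u q`. -/
def dotCLM (u : Fin 3 → ℝ) : (Fin 3 → ℝ) →L[ℝ] ℝ :=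
  ∑ i, u i • ContinuousLinearMap.proj i

lemma dotCLM_apply (u q : Fin 3 → ℝ) : dotCLM u q = dot3 u q := by
  simp [dotCLM, dot3]

lemma hasFDerivAt_pZero {m c : ℝ} (hm : 0 < m) (hc : 0 < c) (q : Fin 3 → ℝ) :
    HasFDerivAt (pZero m c) ((1 / pZero m c q) • dotCLM q) q := by
  have h1 : HasFDerivAt (fun q : Fin 3 → ℝ => m ^ 2 * c ^ 2 + dot3 q q)
      ((2 : ℝ) • dotCLM q) q := by
    have h2 : HasFDerivAt (fun q : Fin 3 → ℝ => ∑ i, q i * q i)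
        (∑ i, (q i • ContinuousLinearMap.proj (R := ℝ) (φ := fun _ : Fin 3 => ℝ) i +
          q i • ContinuousLinearMap.proj i)) q :=
      HasFDerivAt.fun_sum fun i _ => (hasFDerivAt_apply i q).mul (hasFDerivAt_apply i q)
    refine (h2.const_add _).congr_fderiv ?_
    rw [dotCLM, Finset.smul_sum]
    exact Finset.sum_congr rfl fun i _ => by rw [two_smul]
  have hpos : 0 < m ^ 2 * c ^ 2 + dot3 q q := by have := dot3_self_nonneg q; positivity
  refine (h1.sqrt hpos.ne').congr_fderiv ?_
  rw [smul_smul, pZero]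
  congr 1
  field_simp

/-- Derivative of the coefficient of `u` in `boost m c u`. -/
def boostForm (m c : ℝ) (u q : Fin 3 → ℝ) : (Fin 3 → ℝ) →L[ℝ] ℝ :=
  (1 / (c * (c + uZero c u))) • dotCLM u + (1 / c) • (1 / pZero m c q) • dotCLM q

lemma hasFDerivAt_boost {m c : ℝ} (hm : 0 < m) (hc : 0 < c) (u q : Fin 3 → ℝ) :
    HasFDerivAt (boost_s14 m c u)
      (ContinuousLinearMap.id ℝ _ + (boostForm m c u q).smulRight u) q := by
  have h1 : HasFDerivAt (fun q => dot3 u q) (dotCLM u) q := by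
    have := (dotCLM u).hasFDerivAt (x := q)
    refine this.congr_of_eventuallyEq (Eventually.of_forall fun x => ?_)
    exact (dotCLM_apply u x).symm
  have h2 := (h1.const_mul (1 / (c * (c + uZero c u)))).add
    ((hasFDerivAt_pZero hm hc q).const_mul (1 / c))
  have h3 := (hasFDerivAt_id q).add (h2.smul_const u)
  refine h3.congr_of_eventuallyEq (Eventually.of_forall fun x => ?_)
  simp only [boost_s14, Pi.add_apply, id]
  congr 2
  ring

/-- The Jacobian is a rank-one perturbation of the identity, and its determinant is the ratio of
the boosted energy to the original one: `d³p / p⁰` is Lorentz invariant. -/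
lemma det_boost {m c : ℝ} (hm : 0 < m) (hc : 0 < c) (u q : Fin 3 → ℝ) :
    (ContinuousLinearMap.id ℝ _ + (boostForm m c u q).smulRight u).det =
      (uZero c u * pZero m c q + dot3 u q) / (c * pZero m c q) := by
  have hU := uZero_pos hc u
  have hP := pZero_pos hm hc q
  have h : ((ContinuousLinearMap.id ℝ _ + (boostForm m c u q).smulRight u :
      (Fin 3 → ℝ) →L[ℝ] (Fin 3 → ℝ)) : (Fin 3 → ℝ) →ₗ[ℝ] (Fin 3 → ℝ)) =
      LinearMap.transvection (boostForm m c u q : (Fin 3 → ℝ) →ₗ[ℝ] ℝ) u := by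
    refine LinearMap.ext fun x => ?_
    simp [LinearMap.transvection.apply]
  rw [ContinuousLinearMap.det, h, LinearMap.transvection.det]
  simp only [boostForm, ContinuousLinearMap.coe_coe, add_apply,
    smul_apply, dotCLM_apply, smul_eq_mul]
  rw [dot3_self_eq c u, dot3_comm q u]
  field_simp
  ring

lemma integral_boost {m c : ℝ} (hm : 0 < m) (hc : 0 < c) (u : Fin 3 → ℝ)
    (g : (Fin 3 → ℝ) → ℝ) :
    ∫ p, g p = ∫ q, (uZero c u * pZero m c q + dot3 u q) / (c * pZero m c q) *
      g (boost_s14 m c u q) := by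
  have h := integral_image_eq_integral_abs_det_fderiv_smul volume MeasurableSet.univ
    (fun q _ => (hasFDerivAt_boost hm hc u q).hasFDerivWithinAt)
    (boost_injective hm hc u).injOn g
  rw [image_univ, (boost_surjective hm hc u).range_eq, setIntegral_univ, setIntegral_univ] at h
  rw [h]
  refine integral_congr_ae (ae_of_all _ fun q => ?_)
  have hE := energy_pos hm hc u q
  have hP := pZero_pos hm hc q
  simp only [det_boost hm hc, smul_eq_mul]
  rw [abs_of_pos (by positivity)]

/-! ### The second moment of the moving Maxwellian -/

/-- In rest-frame coordinates the exponent of the Maxwellian depends on the energy only. -/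
lemma exponent_boost {m c : ℝ} (hm : 0 < m) (hc : 0 < c) (θ : ℝ) (u q : Fin 3 → ℝ) :
    (dot3 u (boost_s14 m c u q) - uZero c u * pZero m c (boost_s14 m c u q)) / θ =
      -(c / θ * pZero m c q) := by
  rw [dot3_boost hc, pZero_boost hm hc]
  field_simp
  ring

/-- The integrand of the second moment, pulled back to the rest frame. -/
def restIntegrand (m c k : ℝ) (u : Fin 3 → ℝ) (i j : Fin 3) (q : Fin 3 → ℝ) : ℝ :=
  (uZero c u * pZero m c q + dot3 u q) / (c * pZero m c q) *
    (boost_s14 m c u q i * boost_s14 m c u q j * Real.exp (-(k * pZero m c q)))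

lemma abs_le_pZero (m c : ℝ) (q : Fin 3 → ℝ) (i : Fin 3) : |q i| ≤ pZero m c q := by
  refine Real.abs_le_sqrt ?_
  have h := abs_mul_le_dot3_self q i i
  rw [abs_of_nonneg (mul_self_nonneg _)] at h
  nlinarith [sq_nonneg (m * c)]

lemma integrable_pZero_sq_mul_exp {m c k : ℝ} (hk : 0 < k) :
    Integrable fun q : Fin 3 → ℝ => pZero m c q ^ 2 * Real.exp (-(k * pZero m c q)) := by
  simp_rw [pZero_sq, add_mul]
  exact ((integrable_exp_pZero hk).const_mul _).add (integrable_sq_mul_exp_pZero hk)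

lemma integrable_restIntegrand {m c k : ℝ} (hm : 0 < m) (hc : 0 < c) (hk : 0 < k)
    (u : Fin 3 → ℝ) (i j : Fin 3) : Integrable (restIntegrand m c k u i j) := by
  have hU := uZero_pos hc u
  set C : ℝ := uZero c u / (c * (c + uZero c u)) + 1 / c with hC
  have hC0 : 0 ≤ C := by positivity
  have hb : ∀ q l, |boost_s14 m c u q l| ≤ (1 + C * |u l|) * pZero m c q := fun q l => by
    have hP := pZero_pos hm hc q
    have hcoef : |dot3 u q / (c * (c + uZero c u)) + pZero m c q / c| ≤ C * pZero m c q := by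
      calc _ ≤ |dot3 u q / (c * (c + uZero c u))| + |pZero m c q / c| := abs_add_le _ _
        _ = |dot3 u q| / (c * (c + uZero c u)) + pZero m c q / c := by
          rw [abs_div, abs_div, abs_of_pos hP, abs_of_pos hc,
            abs_of_pos (show 0 < c * (c + uZero c u) by positivity)]
        _ ≤ uZero c u * pZero m c q / (c * (c + uZero c u)) + pZero m c q / c := by
          gcongr
          exact (abs_dot3_lt hm hc u q).le
        _ = C * pZero m c q := by rw [hC]; ring
    calc |boost_s14 m c u q l|
        = |q l + (dot3 u q / (c * (c + uZero c u)) + pZero m c q / c) * u l| := by simp [boost_s14]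
      _ ≤ |q l| + |dot3 u q / (c * (c + uZero c u)) + pZero m c q / c| * |u l| := by
        rw [← abs_mul]; exact abs_add_le _ _
      _ ≤ pZero m c q + C * pZero m c q * |u l| := by
        gcongr
        exact abs_le_pZero m c q l
      _ = _ := by ring
  have hdom := (integrable_pZero_sq_mul_exp (m := m) (c := c) hk).const_mul
    (2 * uZero c u / c * ((1 + C * |u i|) * (1 + C * |u j|)))
  refine hdom.mono' ?_ (ae_of_all _ fun q => ?_)
  · have h1 := (continuous_pZero m c).measurable
    have h2 := (continuous_dot3 u).measurable
    refine Measurable.aestronglyMeasurable ?_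
    unfold restIntegrand boost_s14
    simp only [Pi.add_apply, Pi.smul_apply, smul_eq_mul]
    fun_prop
  · have hP := pZero_pos hm hc q
    have hE := energy_pos hm hc u q
    have hlt := (abs_lt.1 (abs_dot3_lt hm hc u q)).2
    have hJ : (uZero c u * pZero m c q + dot3 u q) / (c * pZero m c q) ≤ 2 * uZero c u / c := by
      rw [div_le_div_iff₀ (by positivity) hc]
      nlinarith
    rw [restIntegrand, Real.norm_eq_abs, abs_mul, abs_mul, abs_mul, abs_of_pos (Real.exp_pos _),
      abs_of_pos (show 0 < (uZero c u * pZero m c q + dot3 u q) / (c * pZero m c q) by positivity)]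
    calc _ ≤ 2 * uZero c u / c * (((1 + C * |u i|) * pZero m c q) *
          ((1 + C * |u j|) * pZero m c q) * Real.exp (-(k * pZero m c q))) := by
          gcongr
          · exact hb q i
          · exact hb q j
      _ = _ := by ring

/-- The even part of `restIntegrand` is a combination of products of two linear forms and of
`(p⁰)²`, all against the rest-frame Maxwellian: the singular factor `1 / p⁰` cancels. -/
lemma restIntegrand_add_neg {m c k : ℝ} (hm : 0 < m) (hc : 0 < c)
    (u : Fin 3 → ℝ) (i j : Fin 3) (q : Fin 3 → ℝ) :
    restIntegrand m c k u i j q + restIntegrand m c k u i j (-q) =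
      2 * (uZero c u / c *
        (dot3 (Pi.single i 1 + (u i / (c * (c + uZero c u))) • u) q *
          dot3 (Pi.single j 1 + (u j / (c * (c + uZero c u))) • u) q *
          Real.exp (-(k * pZero m c q))) +
      uZero c u / c ^ 3 * (u i * u j) * (pZero m c q ^ 2 * Real.exp (-(k * pZero m c q))) +
      1 / c ^ 2 * (dot3 u q *
        dot3 (u j • Pi.single i 1 + u i • Pi.single j 1 +
          (2 * u i * u j / (c * (c + uZero c u))) • u) q * Real.exp (-(k * pZero m c q)))) := by
  have hU := uZero_pos hc u
  have hP := pZero_pos hm hc q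
  have hn : pZero m c (-q) = pZero m c q := by
    rw [pZero, pZero, dot3_neg_left, dot3_neg_right, neg_neg]
  simp only [restIntegrand, boost_s14, hn, dot3_neg_right, dot3_add_left, dot3_smul_left,
    dot3_single_left, Pi.add_apply, Pi.smul_apply, Pi.neg_apply, smul_eq_mul]
  generalize Real.exp (-(k * pZero m c q)) = w
  field_simp
  ring

lemma integral_restIntegrand {m c k : ℝ} (hm : 0 < m) (hc : 0 < c) (hk : 0 < k)
    (u : Fin 3 → ℝ) (i j : Fin 3) :
    ∫ q, restIntegrand m c k u i j q =
      4 * Real.pi * m ^ 3 * c / k ^ 2 * uZero c u *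
        ((if i = j then (1 : ℝ) else 0) * c * Kbessel 3 (k * (m * c)) + u i * u j *
          (6 * Kbessel 3 (k * (m * c)) + k * (m * c) * Kbessel 2 (k * (m * c))) / c) := by
  have hU := uZero_pos hc u
  have hF := integrable_restIntegrand hm hc hk u i j
  -- Averaging over `q ↦ -q` discards the odd part of the integrand.
  have hsym : ∫ q, restIntegrand m c k u i j q =
      (∫ q, (restIntegrand m c k u i j q + restIntegrand m c k u i j (-q))) / 2 := by
    rw [integral_add hF hF.comp_neg, integral_neg_eq_self]
    ring
  have hPint : ∫ q : Fin 3 → ℝ, pZero m c q ^ 2 * Real.exp (-(k * pZero m c q)) =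
      (m * c) ^ 2 * (4 * Real.pi * (m * c) ^ 2 / k * Kbessel 2 (k * (m * c))) +
        3 * (4 * Real.pi * (m * c) ^ 3 / k ^ 2 * Kbessel 3 (k * (m * c))) := by
    simp_rw [pZero_sq, add_mul]
    rw [integral_add ((integrable_exp_pZero hk).const_mul _) (integrable_sq_mul_exp_pZero hk),
      integral_const_mul, integral_exp_pZero hm hc hk, integral_sq_mul_exp_pZero hm hc hk]
  rw [hsym]
  simp_rw [restIntegrand_add_neg hm hc]
  have i1 := fun A B => integrable_dot3_mul_dot3 (m := m) (c := c) hk A B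
  have i2 := integrable_pZero_sq_mul_exp (m := m) (c := c) hk
  have hlin : ∀ (A B D : Fin 3 → ℝ) (α β δ : ℝ),
      ∫ q : Fin 3 → ℝ, (α * (dot3 A q * dot3 B q * Real.exp (-(k * pZero m c q))) +
        β * (pZero m c q ^ 2 * Real.exp (-(k * pZero m c q))) +
        δ * (dot3 u q * dot3 D q * Real.exp (-(k * pZero m c q)))) =
      α * (∫ q : Fin 3 → ℝ, dot3 A q * dot3 B q * Real.exp (-(k * pZero m c q))) +
        β * (∫ q : Fin 3 → ℝ, pZero m c q ^ 2 * Real.exp (-(k * pZero m c q))) +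
        δ * ∫ q : Fin 3 → ℝ, dot3 u q * dot3 D q * Real.exp (-(k * pZero m c q)) := by
    intro A B D α β δ
    have i12 : Integrable fun q : Fin 3 → ℝ =>
        α * (dot3 A q * dot3 B q * Real.exp (-(k * pZero m c q))) +
          β * (pZero m c q ^ 2 * Real.exp (-(k * pZero m c q))) :=
      ((i1 A B).const_mul α).add (i2.const_mul β)
    rw [integral_add i12 ((i1 u D).const_mul δ),
      integral_add ((i1 A B).const_mul α) (i2.const_mul β),
      integral_const_mul, integral_const_mul, integral_const_mul]
  rw [integral_const_mul, hlin, integral_dot3_mul_dot3 hm hc hk,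
    integral_dot3_mul_dot3 hm hc hk, hPint]
  have hij : (Pi.single j (1 : ℝ) : Fin 3 → ℝ) i = if i = j then (1 : ℝ) else 0 := by
    rw [Pi.single_apply]
  simp only [dot3_add_left, dot3_add_right, dot3_smul_left, dot3_smul_right, dot3_single_left,
    dot3_comm u (Pi.single _ _), hij]
  rw [dot3_self_eq c u]
  field_simp
  ring

/-- For all `i, j`:
`c ∫ p_i p_j M(p) dp = [n₀m²/(γK₂(γ))][(6K₃(γ)+γK₂(γ))u⁰u_iu_j + c²δ_{ij}K₃(γ)u⁰]`. -/
theorem stmt14 (m c n₀ θ γ u0 : ℝ) (hm : 0 < m) (hc : 0 < c) (hn : 0 < n₀) (hθ : 0 < θ)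
    (u : Fin 3 → ℝ) (hγ : γ = m * c ^ 2 / θ) (hu0 : u0 = Real.sqrt (dot3 u u + c ^ 2))
    (i j : Fin 3) :
    c * ∫ p : Fin 3 → ℝ, p i * p j * Mloc m c n₀ θ u p
      = n₀ * m ^ 2 / (γ * Kbessel 2 γ) *
          ((6 * Kbessel 3 γ + γ * Kbessel 2 γ) * u0 * u i * u j
            + c ^ 2 * (if i = j then (1 : ℝ) else 0) * Kbessel 3 γ * u0) := by
  have hk : 0 < c / θ := by positivity
  have hkγ : c / θ * (m * c) = γ := by rw [hγ]; ring
  have hγ0 : 0 < γ := by rw [hγ]; positivity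
  have hU : u0 = uZero c u := hu0
  have hM : ∀ p : Fin 3 → ℝ, p i * p j * Mloc m c n₀ θ u p =
      n₀ * γ / (4 * Real.pi * m ^ 3 * c ^ 3 * Kbessel 2 γ) *
        (p i * p j * Real.exp ((dot3 u p - uZero c u * pZero m c p) / θ)) := fun p => by
    rw [Mloc, ← hγ, uZero]
    ring
  have hrest := integral_restIntegrand hm hc hk u i j
  rw [hkγ] at hrest
  simp_rw [hM]
  rw [integral_const_mul, integral_boost hm hc u]
  simp_rw [exponent_boost hm hc]
  simp only [restIntegrand] at hrest
  rw [hrest, hU]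
  have hkm : c / θ = γ / (m * c) := by rw [← hkγ]; field_simp
  rw [hkm]
  generalize (if i = j then (1 : ℝ) else 0) = δ
  have hpi := Real.pi_pos
  -- Both sides are multiples of `(K₂(γ))⁻¹`, hence zero by convention if `K₂(γ)` were zero.
  by_cases hK : Kbessel 2 γ = 0
  · simp [hK]
  · field_simp
    ring
end
end
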